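/- arXiv:1103.5255 — 2 statements merged into one kernel-verified Lean document; each statement's English description precedes it below -/
import Mathlib

section
/- The Lie algebra sl(6) over an algebraically closed field of characteristic zero has exactly two non-trivial irreducible representations of dimension at most 14: the standard 6-dimensional representation and its dual. -/
open Module LieAlgebra.SpecialLinear

/-!
Extend a representation of `sl n` to `gl n` by letting scalar matrices act as zero and restrict it
to the diagonal matrices. By `sl₂`-theory the weights `χ : n → k` have integral differences and are
permuted by the symmetric group, so a weight with at least two coordinates inside and at least two
outside of some set of values has at least `(card n).choose 2` conjugates, more than the dimension
allows. Hence every weight is constant up to one coordinate, and going one step along a root string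
shows that this coordinate differs from the others by some `ε ∈ {0, 1, -1}`.

If `ε = 0` for all weights, weight vectors are invariant and the module is trivial. If `ε = 1`,
twisting by a multiple of the trace turns the weight into a standard basis vector and makes the
identity matrix act as `1`. Now all integral weights are nonnegative, which kills enough of the
matrix units applied to a weight vector for `k ^ n` to embed equivariantly. The case `ε = -1`
follows by precomposing with `A ↦ -Aᵀ`.
-/

section Sl2

variable {k L M : Type*} [Field k] [CharZero k] [LieRing L] [LieAlgebra k L] [AddCommGroup M]
  [Module k M] [LieRingModule L M] [LieModule k L M] [FiniteDimensional k M]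
  {h e f : L} {m : M} {μ : k}

lemma exists_pow_toEnd_e_eq_zero (t : IsSl2Triple h e f) (hm : ⁅h, m⁆ = μ • m) :
    ∃ p : ℕ, (LieModule.toEnd k L M e ^ p) m = 0 := by
  by_contra! hne
  have hinj : Function.Injective fun p : ℕ ↦ μ + 2 * p := fun p q hpq ↦ by simpa using hpq
  refine Set.infinite_range_of_injective hinj
    ((LieModule.toEnd k L M h).finite_hasEigenvalue.subset ?_)
  rintro - ⟨p, rfl⟩
  exact Module.End.hasEigenvalue_of_hasEigenvector
    ⟨Module.End.mem_eigenspace_iff.mpr (t.lie_h_pow_toEnd_e hm p), hne p⟩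

lemma exists_hasPrimitiveVectorWith_pow_toEnd_e (t : IsSl2Triple h e f) (hm₀ : m ≠ 0)
    (hm : ⁅h, m⁆ = μ • m) :
    ∃ p : ℕ, t.HasPrimitiveVectorWith ((LieModule.toEnd k L M e ^ p) m) (μ + 2 * p) := by
  obtain ⟨p, hp, hp'⟩ := Nat.exists_not_and_succ_of_not_zero_of_exists
    (p := fun p ↦ (LieModule.toEnd k L M e ^ p) m = 0) (by simpa using hm₀)
    (exists_pow_toEnd_e_eq_zero t hm)
  exact ⟨p, hp, t.lie_h_pow_toEnd_e hm p, by rw [IsSl2Triple.lie_e_pow_toEnd_e, hp']⟩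

lemma exists_int_eq_of_lie_h_eq_smul (t : IsSl2Triple h e f) (hm₀ : m ≠ 0)
    (hm : ⁅h, m⁆ = μ • m) : ∃ d : ℤ, μ = d := by
  obtain ⟨p, hp⟩ := exists_hasPrimitiveVectorWith_pow_toEnd_e t hm₀ hm
  obtain ⟨q, hq⟩ := hp.exists_nat
  exact ⟨q - 2 * p, by push_cast; linear_combination hq⟩

lemma exists_pow_toEnd_f_pow_toEnd_e_ne_zero (t : IsSl2Triple h e f) (hm₀ : m ≠ 0) {s : ℕ} {d : ℤ}
    (hm : ⁅h, m⁆ = (d : k) • m) (hs : s ≤ d) :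
    ∃ p : ℕ, (LieModule.toEnd k L M f ^ (p + s)) ((LieModule.toEnd k L M e ^ p) m) ≠ 0 := by
  obtain ⟨p, hp⟩ := exists_hasPrimitiveVectorWith_pow_toEnd_e t hm₀ hm
  obtain ⟨q, hq⟩ := hp.exists_nat
  have hdq : d + 2 * p = q := by exact_mod_cast hq
  exact ⟨p, hp.pow_toEnd_f_ne_zero_of_eq_nat hq (by omega)⟩

end Sl2

section Combinatorics

lemma choose_le_choose_of_add_le {N r s : ℕ} (hrs : r ≤ s) (hN : r + s ≤ N) :
    N.choose r ≤ N.choose s := by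
  wlog hs : 2 * s ≤ N generalizing s
  · rw [← Nat.choose_symm (by omega : s ≤ N)]
    exact this (by omega) (by omega) (by omega)
  induction s, hrs using Nat.le_induction with
  | base => rfl
  | succ s _ ih =>
    exact (ih (by omega) (by omega)).trans (Nat.choose_le_succ_of_lt_half_left (by omega))

lemma exists_perm_filter_comp_eq {n α : Type*} [Fintype n] (χ : n → α)
    (P : α → Prop) [DecidablePred P] {S : Finset n}
    (hS : S.card = ({i | P (χ i)} : Finset n).card) :
    ∃ σ : Equiv.Perm n, ({i | P ((χ ∘ σ) i)} : Finset n) = S := by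
  classical
  have e : {i // i ∈ S} ≃ {i // P (χ i)} :=
    Fintype.equivOfCardEq (by simp [hS, Fintype.card_subtype])
  refine ⟨e.extendSubtype, Finset.ext fun i ↦ ?_⟩
  by_cases hi : i ∈ S
  · simpa [hi] using e.extendSubtype_mem i hi
  · simpa [hi] using e.extendSubtype_not_mem i hi

lemma exists_forall_ne_eq_of_forall_card_filter_le_one {n α : Type*} [Fintype n]
    (hn : 4 ≤ Fintype.card n) (χ : n → α)
    (h : ∀ (P : α → Prop) [DecidablePred P],
      ({i | P (χ i)} : Finset n).card ≤ 1 ∨ ({i | ¬ P (χ i)} : Finset n).card ≤ 1) :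
    ∃ b z, ∀ i, i ≠ z → χ i = b := by
  classical
  have : Nonempty n := Fintype.card_pos_iff.mp (by omega)
  by_cases hb : ∃ b, ({i | ¬ χ i = b} : Finset n).card ≤ 1
  · obtain ⟨b, hb⟩ := hb
    obtain ⟨z, hz⟩ := Finset.card_le_one_iff_subset_singleton.mp hb
    exact ⟨b, z, fun i hi ↦ by_contra fun hib ↦ hi (by simpa using hz (by simpa using hib))⟩
  · push Not at hb
    have hinj : Function.Injective χ := fun i j hij ↦
      Finset.card_le_one.mp ((h (· = χ j)).resolve_right (hb _).not_ge) i (by simpa) j (by simp)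
    obtain ⟨T, -, hT⟩ := Finset.exists_subset_card_eq (s := (Finset.univ : Finset n)) (n := 2)
      (by rw [Finset.card_univ]; omega)
    have hmem : ({i | χ i ∈ T.image χ} : Finset n) = T := by ext; simp [hinj.eq_iff]
    have hnotMem : ({i | ¬ χ i ∈ T.image χ} : Finset n) = Tᶜ := by ext; simp [hinj.eq_iff]
    have hT' := h (· ∈ T.image χ)
    rw [hmem, hnotMem, Finset.card_compl, hT] at hT'
    omega

lemma sum_add_single {R n : Type*} [Semiring R] [Fintype n] [DecidableEq n] (b ε : R) (z : n) :
    ∑ i, (b + (Pi.single z ε : n → R) i) = Fintype.card n * b + ε := by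
  rw [Finset.sum_add_distrib, Finset.sum_const, Finset.sum_pi_single',
    if_pos (Finset.mem_univ z), nsmul_eq_mul, Finset.card_univ]

end Combinatorics

section Weights

attribute [local instance 100] LieRing.ofAssociativeRing

variable {k n M : Type*} [Field k] [DecidableEq n] [Fintype n] [AddCommGroup M] [Module k M]

lemma isSl2Triple_single [CharZero k] {i j : n} (hij : i ≠ j) :
    IsSl2Triple (Matrix.single i i 1 - Matrix.single j j 1 : Matrix n n k)
      (Matrix.single i j 1) (Matrix.single j i 1) where
  h_ne_zero h := by simpa [Matrix.single_apply, hij.symm] using congrFun (congrFun h i) i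
  lie_e_f := by simp [LieRing.of_associative_ring_bracket]
  lie_h_e_nsmul := by
    simp [LieRing.of_associative_ring_bracket, sub_mul, mul_sub, hij.symm, two_smul]
  lie_h_f_nsmul := by
    rw [two_smul, neg_add, ← sub_eq_add_neg]
    simp [LieRing.of_associative_ring_bracket, sub_mul, mul_sub, hij]

/-- The simultaneous eigenspace of the diagonal matrices in a representation of `gl n` for the
weight `χ`, which is recorded by its values on the diagonal matrix units. -/
def glWeightSpace (ρ : Matrix n n k →ₗ⁅k⁆ Module.End k M) (χ : n → k) : Submodule k M :=
  ⨅ i, (ρ (Matrix.single i i 1)).eigenspace (χ i)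

/-- `χ` is a weight of the representation `ρ` of `gl n`. -/
def IsGLWeight (ρ : Matrix n n k →ₗ⁅k⁆ Module.End k M) (χ : n → k) : Prop :=
  glWeightSpace ρ χ ≠ ⊥

variable {ρ : Matrix n n k →ₗ⁅k⁆ Module.End k M} {χ : n → k} {m : M}

lemma mem_glWeightSpace :
    m ∈ glWeightSpace ρ χ ↔ ∀ i, ρ (Matrix.single i i 1) m = χ i • m := by
  simp [glWeightSpace]

lemma isGLWeight_iff : IsGLWeight ρ χ ↔ ∃ m ≠ 0, m ∈ glWeightSpace ρ χ := by
  simp only [IsGLWeight, Submodule.ne_bot_iff, and_comm]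

lemma rep_lie_apply (A B : Matrix n n k) (m : M) :
    ρ (A * B - B * A) m = ρ A (ρ B m) - ρ B (ρ A m) := by
  rw [← LieRing.of_associative_ring_bracket, LieHom.map_lie,
    LieRing.of_associative_ring_bracket]
  rfl

lemma commute_single_self (ρ : Matrix n n k →ₗ⁅k⁆ Module.End k M) (i j : n) :
    Commute (ρ (Matrix.single i i 1)) (ρ (Matrix.single j j 1)) := by
  rw [commute_iff_lie_eq, ← LieHom.map_lie]
  rcases eq_or_ne i j with rfl | hij
  · simp
  · simp [LieRing.of_associative_ring_bracket, hij, hij.symm]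

lemma single_apply_mem_glWeightSpace (hm : m ∈ glWeightSpace ρ χ) (i j : n) :
    ρ (Matrix.single i j 1) m ∈ glWeightSpace ρ (χ + (Pi.single i 1 - Pi.single j 1)) := by
  rw [mem_glWeightSpace] at hm ⊢
  intro l
  have hbracket : (Matrix.single l l 1 * Matrix.single i j 1 -
      Matrix.single i j 1 * Matrix.single l l 1 : Matrix n n k) =
      (Pi.single i 1 - Pi.single j 1 : n → k) l • Matrix.single i j 1 := by
    rcases eq_or_ne l i with rfl | hi <;> rcases eq_or_ne l j with rfl | hj <;>
      simp [*, Ne.symm]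
  have := rep_lie_apply (ρ := ρ) (Matrix.single l l 1) (Matrix.single i j 1) m
  rw [hbracket, hm l, map_smul, map_smul, LinearMap.smul_apply] at this
  rw [Pi.add_apply, add_smul, this]
  abel

lemma pow_single_apply_mem_glWeightSpace (hm : m ∈ glWeightSpace ρ χ) (i j : n) (p : ℕ) :
    (ρ (Matrix.single i j 1) ^ p) m ∈
      glWeightSpace ρ (χ + p • (Pi.single i 1 - Pi.single j 1)) := by
  induction p with
  | zero => simpa using hm
  | succ p ih =>
    rw [pow_succ', Module.End.mul_apply, succ_nsmul, ← add_assoc]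
    exact single_apply_mem_glWeightSpace ih i j

namespace IsGLWeight

section String

variable [CharZero k] [FiniteDimensional k M]

lemma exists_int_sub (hχ : IsGLWeight ρ χ) (i j : n) : ∃ d : ℤ, χ i - χ j = d := by
  rcases eq_or_ne i j with rfl | hij
  · exact ⟨0, by simp⟩
  obtain ⟨m, hm₀, hm⟩ := isGLWeight_iff.mp hχ
  rw [mem_glWeightSpace] at hm
  let _ := LieRingModule.compLieHom M ρ
  have := LieModule.compLieHom M ρ
  refine exists_int_eq_of_lie_h_eq_smul (isSl2Triple_single (k := k) hij) hm₀ ?_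
  rw [LieRingModule.compLieHom_apply, map_sub, sub_lie, sub_smul, ← hm, ← hm]
  rfl

lemma sub_root (hχ : IsGLWeight ρ χ) {i j : n} (hij : i ≠ j) {d : ℤ} (hd : χ i - χ j = d) {s : ℕ}
    (hs : s ≤ d) : IsGLWeight ρ (χ - s • (Pi.single i 1 - Pi.single j 1)) := by
  obtain ⟨m, hm₀, hm⟩ := isGLWeight_iff.mp hχ
  let _ := LieRingModule.compLieHom M ρ
  have := LieModule.compLieHom M ρ
  have hh : ⁅(Matrix.single i i 1 - Matrix.single j j 1 : Matrix n n k), m⁆ = (d : k) • m := by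
    rw [mem_glWeightSpace] at hm
    rw [LieRingModule.compLieHom_apply, map_sub, sub_lie, ← hd, sub_smul, ← hm, ← hm]
    rfl
  obtain ⟨p, hp⟩ := exists_pow_toEnd_f_pow_toEnd_e_ne_zero (isSl2Triple_single hij) hm₀ hh hs
  have hweight : χ - s • (Pi.single i 1 - Pi.single j 1) =
      χ + p • (Pi.single i 1 - Pi.single j 1) + (p + s) • (Pi.single j 1 - Pi.single i 1) := by
    module
  refine isGLWeight_iff.mpr ⟨_, hp, ?_⟩
  rw [hweight]
  exact pow_single_apply_mem_glWeightSpace (pow_single_apply_mem_glWeightSpace hm i j p) j i (p + s)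

lemma comp_swap (hχ : IsGLWeight ρ χ) (i j : n) : IsGLWeight ρ (χ ∘ Equiv.swap i j) := by
  rcases eq_or_ne i j with rfl | hij
  · simpa using hχ
  obtain ⟨d, hd⟩ := hχ.exists_int_sub i j
  wlog hd₀ : 0 ≤ d generalizing i j d
  · rw [Equiv.swap_comm]
    exact this j i hij.symm (-d) (by push_cast; rw [← hd, neg_sub]) (by omega)
  lift d to ℕ using hd₀
  convert hχ.sub_root hij hd le_rfl using 1
  ext l
  rcases eq_or_ne l i with rfl | hi
  · simp only [Int.cast_natCast] at hd
    simp [hij, ← hd]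
  · rcases eq_or_ne l j with rfl | hj
    · simp only [Int.cast_natCast] at hd
      simp [hi, ← hd]
    · simp [hi, hj, Equiv.swap_apply_of_ne_of_ne]

lemma comp_perm (hχ : IsGLWeight ρ χ) (σ : Equiv.Perm n) : IsGLWeight ρ (χ ∘ σ) := by
  induction σ using Equiv.Perm.swap_induction_on generalizing χ with
  | one => exact hχ
  | swap_mul σ i j _ ih =>
    rw [Equiv.Perm.coe_mul, ← Function.comp_assoc]
    exact ih (hχ.comp_swap i j)

end String

lemma iSupIndep_glWeightSpace (ρ : Matrix n n k →ₗ⁅k⁆ Module.End k M) :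
    iSupIndep (glWeightSpace ρ) := by
  refine (Module.End.independent_iInf_maxGenEigenspace_of_forall_mapsTo _ fun i j φ ↦
    Module.End.mapsTo_maxGenEigenspace_of_comm (commute_single_self ρ j i) φ).mono
    fun χ ↦ iInf_mono fun i ↦ (ρ (Matrix.single i i 1)).genEigenspace_le_maximal _ 1

lemma card_le_finrank [FiniteDimensional k M] (S : Finset (n → k)) (hS : ∀ χ ∈ S, IsGLWeight ρ χ) :
    S.card ≤ finrank k M := by
  classical
  have hind : iSupIndep fun χ : S ↦ glWeightSpace ρ χ :=
    (iSupIndep_glWeightSpace ρ).comp Subtype.val_injective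
  calc S.card = Fintype.card {χ : S // glWeightSpace ρ χ.1 ≠ ⊥} := by
        rw [← Fintype.card_coe]
        exact (Fintype.card_congr
          (Equiv.subtypeUnivEquiv (p := fun χ : S ↦ glWeightSpace ρ χ ≠ ⊥) fun χ ↦ hS χ χ.2)).symm
    _ ≤ finrank k M := hind.subtype_ne_bot_le_finrank

end IsGLWeight

lemma exists_isGLWeight [IsAlgClosed k] [CharZero k] [FiniteDimensional k M] [Nontrivial M]
    (ρ : Matrix n n k →ₗ⁅k⁆ Module.End k M) : ∃ χ, IsGLWeight ρ χ := by
  let δ : (n → k) →ₗ⁅k⁆ Matrix n n k := (Matrix.diagonalAlgHom k : (n → k) →ₐ[k] Matrix n n k)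
  let _ := LieRingModule.compLieHom M (ρ.comp δ)
  have := LieModule.compLieHom M (ρ.comp δ)
  have : IsLieAbelian (n → k) := isMulCommutative_iff_isLieAbelian.mp inferInstance
  obtain ⟨χ, hχ⟩ := LieModule.exists_nontrivial_weightSpace_of_isSolvable k (n → k) M
  obtain ⟨⟨m, hm⟩, hm₀⟩ := exists_ne (0 : LieModule.weightSpace M χ)
  rw [LieModule.mem_weightSpace] at hm
  refine ⟨fun i ↦ χ (Pi.single i 1), isGLWeight_iff.mpr
    ⟨m, by simpa using hm₀, mem_glWeightSpace.mpr fun i ↦ ?_⟩⟩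
  rw [← hm (Pi.single i 1), ← Matrix.diagonal_single]
  rfl

/-- The twist of a representation `ρ` of `gl n` by `c` times the trace character, which translates
all weights by `c`. -/
def glTwist (ρ : Matrix n n k →ₗ⁅k⁆ Module.End k M) (c : k) :
    Matrix n n k →ₗ⁅k⁆ Module.End k M where
  toLinearMap := (ρ : Matrix n n k →ₗ[k] Module.End k M) +
    (c • Matrix.traceLinearMap n k k).smulRight (1 : Module.End k M)
  map_lie' {A B} := by
    have htrace : ⁅A, B⁆.trace = 0 := LieAlgebra.matrix_trace_commutator_zero n k A B
    change ρ ⁅A, B⁆ + (c * ⁅A, B⁆.trace) • 1 =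
      ⁅ρ A + (c * A.trace) • 1, ρ B + (c * B.trace) • 1⁆
    rw [htrace, mul_zero, zero_smul, add_zero, LieHom.map_lie]
    simp only [LieRing.of_associative_ring_bracket, add_mul, mul_add, smul_mul_assoc,
      mul_smul_comm, one_mul, mul_one]
    module

lemma glTwist_apply (ρ : Matrix n n k →ₗ⁅k⁆ Module.End k M) (c : k) (A : Matrix n n k) :
    glTwist ρ c A = ρ A + (c * A.trace) • 1 := rfl

lemma IsGLWeight.glTwist (hχ : IsGLWeight ρ χ) (c : k) :
    IsGLWeight (glTwist ρ c) fun i ↦ χ i + c := by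
  obtain ⟨m, hm₀, hm⟩ := isGLWeight_iff.mp hχ
  rw [mem_glWeightSpace] at hm
  exact isGLWeight_iff.mpr ⟨m, hm₀, mem_glWeightSpace.mpr fun i ↦ by
    simp [glTwist_apply, hm, add_smul]⟩

/-- The Lie algebra automorphism `A ↦ -Aᵀ` of `gl n`; composing a representation with it
negates the weights. -/
def negTranspose : Matrix n n k →ₗ⁅k⁆ Matrix n n k where
  toLinearMap := -(Matrix.transposeLinearEquiv n n k k : Matrix n n k →ₗ[k] Matrix n n k)
  map_lie' {A B} := by
    simp [LieRing.of_associative_ring_bracket]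

lemma negTranspose_apply (A : Matrix n n k) : negTranspose A = -A.transpose := rfl

lemma IsGLWeight.comp_negTranspose (hχ : IsGLWeight ρ χ) :
    IsGLWeight (ρ.comp negTranspose) (-χ) := by
  obtain ⟨m, hm₀, hm⟩ := isGLWeight_iff.mp hχ
  rw [mem_glWeightSpace] at hm
  exact isGLWeight_iff.mpr ⟨m, hm₀, mem_glWeightSpace.mpr fun i ↦ by
    simp [negTranspose_apply, hm]⟩

lemma rep_one_apply_eq_sum_smul (hm : m ∈ glWeightSpace ρ χ) : ρ 1 m = (∑ i, χ i) • m := by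
  rw [mem_glWeightSpace] at hm
  have hone : (1 : Matrix n n k) = ∑ i, Matrix.single i i 1 := by
    rw [Matrix.sum_single_one]
  rw [hone, map_sum, LinearMap.sum_apply, Finset.sum_smul]
  exact Finset.sum_congr rfl fun i _ ↦ hm i

lemma IsGLWeight.sum_eq_of_rep_one_eq_smul (hχ : IsGLWeight ρ χ) {c : k} (hρ : ρ 1 = c • 1) :
    ∑ i, χ i = c := by
  obtain ⟨m, hm₀, hm⟩ := isGLWeight_iff.mp hχ
  have := rep_one_apply_eq_sum_smul hm
  rw [hρ] at this
  exact (smul_left_injective k hm₀ this).symm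

namespace IsGLWeight

section Small

variable [CharZero k] [FiniteDimensional k M]

lemma choose_card_filter_le_finrank (hχ : IsGLWeight ρ χ) (P : k → Prop) [DecidablePred P] :
    (Fintype.card n).choose ({i | P (χ i)} : Finset n).card ≤ finrank k M := by
  classical
  choose! σ hσ using fun (S : Finset n)
    (hS : S ∈ Finset.powersetCard ({i | P (χ i)} : Finset n).card Finset.univ) ↦
      exists_perm_filter_comp_eq χ P (Finset.mem_powersetCard.mp hS).2
  have hinj : Set.InjOn (fun S ↦ χ ∘ σ S)
      (Finset.powersetCard ({i | P (χ i)} : Finset n).card Finset.univ : Finset (Finset n)) := by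
    intro S hS T hT hST
    rw [← hσ S hS, ← hσ T hT]
    simp only [hST]
  rw [← Finset.card_univ, ← Finset.card_powersetCard, ← Finset.card_image_of_injOn hinj]
  refine card_le_finrank (ρ := ρ) _ fun ψ hψ ↦ ?_
  obtain ⟨S, -, rfl⟩ := Finset.mem_image.mp hψ
  exact hχ.comp_perm (σ S)

lemma choose_le_finrank (hχ : IsGLWeight ρ χ) (P : k → Prop) [DecidablePred P] {r : ℕ}
    (h₁ : r ≤ ({i | P (χ i)} : Finset n).card) (h₂ : r ≤ ({i | ¬ P (χ i)} : Finset n).card) :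
    (Fintype.card n).choose r ≤ finrank k M := by
  have hcard := Finset.card_filter_add_card_filter_not (s := Finset.univ) fun i ↦ P (χ i)
  rw [Finset.card_univ] at hcard
  exact (choose_le_choose_of_add_le h₁ (by omega)).trans (hχ.choose_card_filter_le_finrank P)

lemma four_le_card (hχ : IsGLWeight ρ χ) {i j : n} (hij : χ i ≠ χ j)
    (hM : finrank k M < (Fintype.card n).choose 2) : 4 ≤ Fintype.card n := by
  classical
  have hle : (Fintype.card n).choose 1 ≤ finrank k M :=
    hχ.choose_le_finrank (· = χ i) (Finset.card_pos.mpr ⟨i, by simp⟩)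
      (Finset.card_pos.mpr ⟨j, by simpa using hij.symm⟩)
  rw [Nat.choose_one_right] at hle
  by_contra! hlt
  have : (Fintype.card n).choose 2 ≤ Fintype.card n := by
    interval_cases Fintype.card n <;> decide
  omega

variable (hn : 4 ≤ Fintype.card n) (hM : finrank k M < (Fintype.card n).choose 2)
include hn hM

lemma exists_forall_ne_eq (hχ : IsGLWeight ρ χ) : ∃ b z, ∀ i, i ≠ z → χ i = b := by
  classical
  refine exists_forall_ne_eq_of_forall_card_filter_le_one hn χ fun P _ ↦ ?_
  by_contra! h
  exact hM.not_ge (hχ.choose_le_finrank P h.1 h.2)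

lemma eq_or_eq_of_forall_ne (hχ : IsGLWeight ρ χ) {b : k} {p q : n} (hpq : p ≠ q)
    (hb : ∀ i, i ≠ p → i ≠ q → χ i = b) : χ p = b ∨ χ q = b := by
  classical
  by_contra! h
  have hne : ({i | ¬ χ i = b} : Finset n) = {p, q} := by
    ext i
    grind
  have hcard := Finset.card_filter_add_card_filter_not (s := Finset.univ) fun i ↦ χ i = b
  rw [hne, Finset.card_pair hpq, Finset.card_univ] at hcard
  exact hM.not_ge (hχ.choose_le_finrank (· = b) (by omega) (by rw [hne, Finset.card_pair hpq]))

lemma le_one_of_sub_eq (hχ : IsGLWeight ρ χ) {b : k} {z : n} (hb : ∀ i, i ≠ z → χ i = b) {d : ℤ}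
    (hd : χ z - b = d) : d ≤ 1 := by
  obtain ⟨j, hj⟩ : ∃ j, j ≠ z := Fintype.exists_ne_of_one_lt_card (by omega) z
  by_contra! hd₁
  have hψ := hχ.sub_root hj.symm (by rwa [hb j hj]) (s := 1) (by omega)
  have hψb := hψ.eq_or_eq_of_forall_ne hn hM hj.symm (b := b) fun i hiz hij ↦ by
    simp [hiz, hij, hb]
  rcases hψb with h | h
  · have hz : χ z - 1 = b := by simpa [hj.symm] using h
    have hd_one : (d : k) = (1 : ℤ) := by
      rw [← hd, Int.cast_one]
      linear_combination hz
    exact hd₁.ne' (Int.cast_injective hd_one)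
  · simp [hj, hb] at h

lemma exists_eq_add_single (hχ : IsGLWeight ρ χ) :
    ∃ b z, ∃ ε : ℤ, |ε| ≤ 1 ∧ χ = fun i ↦ b + (Pi.single z ε : n → k) i := by
  obtain ⟨b, z, hb⟩ := hχ.exists_forall_ne_eq hn hM
  obtain ⟨j, hj⟩ : ∃ j, j ≠ z := Fintype.exists_ne_of_one_lt_card (by omega) z
  obtain ⟨d, hd⟩ := hχ.exists_int_sub z j
  rw [hb j hj] at hd
  refine ⟨b, z, d, abs_le.mpr ⟨?_, hχ.le_one_of_sub_eq hn hM hb hd⟩, ?_⟩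
  · have := hχ.comp_negTranspose.le_one_of_sub_eq hn hM (b := -b) (d := -d)
      (fun i hi ↦ by simp [hb i hi]) (by push_cast; rw [← hd, Pi.neg_apply]; ring)
    omega
  · ext i
    rcases eq_or_ne i z with rfl | hi
    · simp [← hd]
    · simp [hi, hb]

lemma nonneg_of_rep_one_eq_one (hρ : ρ 1 = 1) {d : n → ℤ} (hd : IsGLWeight ρ fun i ↦ (d i : k))
    (i : n) : 0 ≤ d i := by
  obtain ⟨b, z, ε, hε, hb⟩ := hd.exists_eq_add_single hn hM
  obtain ⟨j, hj⟩ : ∃ j, j ≠ z := Fintype.exists_ne_of_one_lt_card (by omega) z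
  have hbj : b = d j := by
    simpa [hj] using (congrFun hb j).symm
  subst hbj
  have hsum : Fintype.card n * d j + ε = 1 := by
    have hsum := hd.sum_eq_of_rep_one_eq_smul (c := 1) (by rw [hρ, one_smul])
    rw [hb, sum_add_single] at hsum
    exact_mod_cast hsum
  obtain ⟨hε₁, hε₂⟩ := abs_le.mp hε
  have hdj : d j = 0 := by
    have : (4 : ℤ) ≤ Fintype.card n := by exact_mod_cast hn
    exact le_antisymm (by nlinarith) (by nlinarith)
  have hε_one : ε = 1 := by
    rwa [hdj, mul_zero, zero_add] at hsum
  have hdi : (d i : k) = (Pi.single z 1 : n → k) i := by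
    simpa [hdj, hε_one] using congrFun hb i
  rcases eq_or_ne i z with rfl | hi
  · have : d i = 1 := by simpa using hdi
    omega
  · have : d i = 0 := by simpa [hi] using hdi
    omega

end Small

end IsGLWeight

lemma single_apply_eq_zero_of_nonneg
    (hpos : ∀ d : n → ℤ, IsGLWeight ρ (fun i ↦ (d i : k)) → ∀ i, 0 ≤ d i) {j l : n} (hjl : j ≠ l)
    (hm : m ∈ glWeightSpace ρ (Pi.single l 1)) (i : n) : ρ (Matrix.single i j 1) m = 0 := by
  rcases eq_or_ne i j with rfl | hij
  · simpa [hjl] using mem_glWeightSpace.mp hm i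
  by_contra hne
  have hmem := single_apply_mem_glWeightSpace hm i j
  have hcast : (Pi.single l 1 + (Pi.single i 1 - Pi.single j 1) : n → k) =
      fun a ↦ ((Pi.single l 1 + (Pi.single i 1 - Pi.single j 1) : n → ℤ) a : k) := by
    ext a
    simp [Pi.single_apply]
  rw [hcast] at hmem
  have := hpos _ (isGLWeight_iff.mpr ⟨_, hne, hmem⟩) j
  simp only [Pi.add_apply, Pi.sub_apply, Pi.single_eq_of_ne hjl, Pi.single_eq_of_ne hij.symm,
    Pi.single_eq_same] at this
  omega

lemma apply_eq_sum_single (ρ : Matrix n n k →ₗ⁅k⁆ Module.End k M) (A : Matrix n n k) (m : M) :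
    ρ A m = ∑ i, ∑ j, A i j • ρ (Matrix.single i j 1) m := by
  conv_lhs => rw [Matrix.matrix_eq_sum_single A]
  simp only [map_sum, LinearMap.sum_apply]
  refine Finset.sum_congr rfl fun i _ ↦ Finset.sum_congr rfl fun j _ ↦ ?_
  rw [← LinearMap.smul_apply, ← map_smul, Matrix.smul_single, smul_eq_mul, mul_one]

lemma single_apply_single_apply_of_nonneg
    (hpos : ∀ d : n → ℤ, IsGLWeight ρ (fun i ↦ (d i : k)) → ∀ i, 0 ≤ d i) {z : n}
    (hm : m ∈ glWeightSpace ρ (Pi.single z 1)) (i j l : n) :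
    ρ (Matrix.single i j 1) (ρ (Matrix.single l z 1) m) =
      if j = l then ρ (Matrix.single i z 1) m else 0 := by
  have hzz : ρ (Matrix.single z z 1) m = m := by simpa using mem_glWeightSpace.mp hm z
  rcases eq_or_ne j l with rfl | hjl
  · rw [if_pos rfl]
    rcases eq_or_ne j z with rfl | hjz
    · rw [hzz]
    have hkill (a : n) : ρ (Matrix.single a j 1) m = 0 :=
      single_apply_eq_zero_of_nonneg hpos hjz hm a
    have hbracket := rep_lie_apply (ρ := ρ) (Matrix.single i j 1) (Matrix.single j z 1) m
    rcases eq_or_ne i z with rfl | hiz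
    · simpa [hkill, eq_comm] using hbracket
    · simpa [hiz.symm, hkill, eq_comm] using hbracket
  · rw [if_neg hjl]
    exact single_apply_eq_zero_of_nonneg hpos hjl
      (by simpa using single_apply_mem_glWeightSpace hm l z) i

lemma exists_injective_equivariant_of_nonneg
    (hpos : ∀ d : n → ℤ, IsGLWeight ρ (fun i ↦ (d i : k)) → ∀ i, 0 ≤ d i) {z : n}
    (hz : IsGLWeight ρ (Pi.single z 1)) :
    ∃ φ : (n → k) →ₗ[k] M, Function.Injective φ ∧ ∀ A w, ρ A (φ w) = φ (A.mulVec w) := by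
  obtain ⟨m, hm₀, hm⟩ := isGLWeight_iff.mp hz
  let v (l : n) : M := ρ (Matrix.single l z 1) m
  have hcol (A : Matrix n n k) (l : n) : ρ A (v l) = ∑ i, A i l • v i := by
    simp [v, apply_eq_sum_single ρ A, single_apply_single_apply_of_nonneg hpos hm]
  have hequiv (A : Matrix n n k) (w : n → k) : ρ A (Fintype.linearCombination k v w) =
      Fintype.linearCombination k v (A.mulVec w) := by
    simp only [Fintype.linearCombination_apply, map_sum, map_smul, hcol, Finset.smul_sum,
      Matrix.mulVec, dotProduct, Finset.sum_smul, smul_smul]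
    rw [Finset.sum_comm]
    simp only [mul_comm]
  refine ⟨Fintype.linearCombination k v, (injective_iff_map_eq_zero _).mpr fun w hw ↦ ?_, hequiv⟩
  ext i
  have hvz : v z = m := by simpa using mem_glWeightSpace.mp hm z
  have hwi := hequiv (Matrix.single z i 1) w
  rw [hw, map_zero, Matrix.single_mulVec, one_mul, ← Pi.single,
    Fintype.linearCombination_apply_single, hvz] at hwi
  exact (smul_eq_zero.mp hwi.symm).resolve_right hm₀

section Recognition

variable [CharZero k] [FiniteDimensional k M]

lemma exists_injective_equivariant_of_add_single (hn : 4 ≤ Fintype.card n)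
    (hM : finrank k M < (Fintype.card n).choose 2) (hρ : ρ 1 = 0) {b : k} {z : n}
    (hχ : IsGLWeight ρ fun i ↦ b + (Pi.single z 1 : n → k) i) :
    ∃ φ : (n → k) →ₗ[k] M, Function.Injective φ ∧
      ∀ A v, A.trace = 0 → ρ A (φ v) = φ (A.mulVec v) := by
  have hb : Fintype.card n * b = -1 := by
    have hsum := hχ.sum_eq_of_rep_one_eq_smul (c := 0) (by rw [hρ, zero_smul])
    rw [sum_add_single] at hsum
    exact eq_neg_of_add_eq_zero_left hsum
  have hone : glTwist ρ (-b) 1 = 1 := by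
    rw [glTwist_apply, hρ, zero_add, Matrix.trace_one, neg_mul, mul_comm, hb, neg_neg, one_smul]
  have hz : IsGLWeight (glTwist ρ (-b)) (Pi.single z 1) := by
    simpa using hχ.glTwist (-b)
  obtain ⟨φ, hφ, hequiv⟩ := exists_injective_equivariant_of_nonneg
    (fun d hd ↦ hd.nonneg_of_rep_one_eq_one hn hM hone) hz
  exact ⟨φ, hφ, fun A v hA ↦ by simpa [glTwist_apply, hA] using hequiv A v⟩

lemma exists_injective_equivariant_of_sub_single (hn : 4 ≤ Fintype.card n)
    (hM : finrank k M < (Fintype.card n).choose 2) (hρ : ρ 1 = 0) {b : k} {z : n}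
    (hχ : IsGLWeight ρ fun i ↦ b - (Pi.single z 1 : n → k) i) :
    ∃ φ : (n → k) →ₗ[k] M, Function.Injective φ ∧
      ∀ A v, A.trace = 0 → ρ A (φ v) = φ (-A.transpose.mulVec v) := by
  have hρ' : ρ.comp negTranspose 1 = 0 := by
    rw [LieHom.comp_apply, negTranspose_apply, Matrix.transpose_one, map_neg, hρ, neg_zero]
  have hχ' : IsGLWeight (ρ.comp negTranspose) fun i ↦ -b + (Pi.single z 1 : n → k) i := by
    convert hχ.comp_negTranspose using 2
    rw [Pi.neg_apply, neg_sub, sub_eq_neg_add]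
  obtain ⟨φ, hφ, hequiv⟩ := exists_injective_equivariant_of_add_single hn hM hρ' hχ'
  refine ⟨φ, hφ, fun A v hA ↦ ?_⟩
  have hA' : (negTranspose A).trace = 0 := by
    rw [negTranspose_apply, Matrix.trace_neg, Matrix.trace_transpose, hA, neg_zero]
  simpa [negTranspose_apply, Matrix.neg_mulVec] using hequiv (negTranspose A) v hA'

end Recognition

lemma apply_eq_zero_of_forall_isGLWeight_const [CharZero k]
    (h : ∀ ψ, IsGLWeight ρ ψ → ∀ i j, ψ i = ψ j) (hm₀ : m ≠ 0) (hm : m ∈ glWeightSpace ρ χ)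
    {A : Matrix n n k} (hA : A.trace = 0) : ρ A m = 0 := by
  have hχ : IsGLWeight ρ χ := isGLWeight_iff.mpr ⟨m, hm₀, hm⟩
  have hoff {i j : n} (hij : i ≠ j) : ρ (Matrix.single i j 1) m = 0 := by
    by_contra hne
    have hconst := h _ (isGLWeight_iff.mpr ⟨_, hne, single_apply_mem_glWeightSpace hm i j⟩) i j
    have : (1 : k) = -1 := by simpa [hij, hij.symm, h χ hχ i j] using hconst
    exact one_ne_zero (self_eq_neg.mp this)
  calc ρ A m = ∑ i, A i i • χ i • m := by
        rw [apply_eq_sum_single]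
        refine Finset.sum_congr rfl fun i _ ↦ ?_
        rw [Finset.sum_eq_single_of_mem i (Finset.mem_univ i) fun j _ hj ↦ by
          rw [hoff hj.symm, smul_zero], mem_glWeightSpace.mp hm]
    _ = 0 := by
        rcases isEmpty_or_nonempty n with _ | ⟨⟨z⟩⟩
        · simp
        simp only [h χ hχ _ z, smul_smul, ← Finset.sum_smul, ← Finset.sum_mul]
        rw [show ∑ i, A i i = 0 from hA, zero_mul, zero_smul]

end Weights

section SpecialLinear

attribute [local instance 100] LieRing.ofAssociativeRing

variable {k n : Type*} [Field k] [Fintype n] [DecidableEq n]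

lemma trace_coe_sl (x : sl n k) : (x : Matrix n n k).trace = 0 := x.2

variable [CharZero k]

lemma trace_sub_inv_card_mul_trace_smul_one (A : Matrix n n k) :
    (A - ((Fintype.card n : k)⁻¹ * A.trace) • (1 : Matrix n n k)).trace = 0 := by
  rcases isEmpty_or_nonempty n
  · exact Matrix.trace_eq_zero_of_isEmpty _
  · have : (Fintype.card n : k) ≠ 0 := Nat.cast_ne_zero.mpr Fintype.card_ne_zero
    rw [Matrix.trace_sub, Matrix.trace_smul, Matrix.trace_one, smul_eq_mul, mul_right_comm,
      inv_mul_cancel₀ this, one_mul, sub_self]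

/-- The projection of `gl n` onto `sl n` along the scalar matrices, through which representations of
`sl n` are extended to `gl n`. -/
def slProj : Matrix n n k →ₗ⁅k⁆ sl n k where
  toLinearMap := (LinearMap.id - ((Fintype.card n : k)⁻¹ • Matrix.traceLinearMap n k k).smulRight
    (1 : Matrix n n k)).codRestrict (sl n k).toSubmodule trace_sub_inv_card_mul_trace_smul_one
  map_lie' {A B} := by
    have htrace : ⁅A, B⁆.trace = 0 := LieAlgebra.matrix_trace_commutator_zero n k A B
    ext1
    change ⁅A, B⁆ - ((Fintype.card n : k)⁻¹ * ⁅A, B⁆.trace) • 1 =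
      ⁅A - ((Fintype.card n : k)⁻¹ * A.trace) • 1, B - ((Fintype.card n : k)⁻¹ * B.trace) • 1⁆
    rw [htrace, mul_zero, zero_smul, sub_zero]
    simp only [LieRing.of_associative_ring_bracket, sub_mul, mul_sub, smul_mul_assoc,
      mul_smul_comm, one_mul, mul_one]
    module

lemma coe_slProj (A : Matrix n n k) :
    (slProj A : Matrix n n k) = A - ((Fintype.card n : k)⁻¹ * A.trace) • 1 := rfl

lemma slProj_coe (x : sl n k) : slProj (x : Matrix n n k) = x := by
  ext1
  rw [coe_slProj, trace_coe_sl, mul_zero, zero_smul, sub_zero]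

lemma slProj_one : slProj (1 : Matrix n n k) = 0 := by
  ext1
  rcases isEmpty_or_nonempty n
  · exact Subsingleton.elim _ _
  · rw [coe_slProj, Matrix.trace_one, inv_mul_cancel₀ (Nat.cast_ne_zero.mpr Fintype.card_ne_zero),
      one_smul, sub_self]
    rfl

variable (M : Type*) [AddCommGroup M] [Module k M] [LieRingModule (sl n k) M]
  [LieModule k (sl n k) M]

/-- The representation of `gl n` extending the `sl n`-module `M` in which scalar matrices act as
zero. -/
def glRep : Matrix n n k →ₗ⁅k⁆ Module.End k M :=
  (LieModule.toEnd k (sl n k) M).comp slProj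

variable {M}

lemma glRep_coe (x : sl n k) (m : M) : glRep M (x : Matrix n n k) m = ⁅x, m⁆ := by
  rw [glRep, LieHom.comp_apply, slProj_coe, LieModule.toEnd_apply_apply]

lemma glRep_one : glRep M (1 : Matrix n n k) = 0 := by
  rw [glRep, LieHom.comp_apply, slProj_one, map_zero]

end SpecialLinear

section Irreducible

variable {k L M : Type*} [Field k] [LieRing L] [AddCommGroup M] [Module k M] [LieRingModule L M]
  [LieModule.IsIrreducible k L M]

lemma exists_equiv_of_injective_equivariant {V : Type*} [AddCommGroup V] [Module k V]
    [Nontrivial V] (a : L → V → V) {φ : V →ₗ[k] M} (hφ : Function.Injective φ)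
    (h : ∀ x v, ⁅x, φ v⁆ = φ (a x v)) :
    ∃ e : M ≃ₗ[k] V, ∀ x m, e ⁅x, m⁆ = a x (e m) := by
  let N : LieSubmodule k L M :=
    { __ := LinearMap.range φ
      lie_mem := by
        rintro x - ⟨v, rfl⟩
        exact ⟨a x v, (h x v).symm⟩ }
  have hN : N ≠ ⊥ := by
    obtain ⟨v, hv⟩ := exists_ne (0 : V)
    exact fun h ↦ (map_ne_zero_iff φ hφ).mpr hv (N.eq_bot_iff.mp h (φ v) ⟨v, rfl⟩)
  have hsurj : Function.Surjective φ := fun m ↦ by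
    have hm : m ∈ N := (eq_bot_or_eq_top N).resolve_left hN ▸ LieSubmodule.mem_top m
    exact hm
  let e := LinearEquiv.ofBijective φ ⟨hφ, hsurj⟩
  refine ⟨e.symm, fun x m ↦ ?_⟩
  obtain ⟨v, rfl⟩ := e.surjective m
  rw [e.symm_apply_apply, e.symm_apply_eq]
  exact h x v

variable (k) [LieAlgebra k L] [LieModule k L M]

include k in
lemma lie_eq_zero_of_forall_lie_eq_zero {m : M} (hm₀ : m ≠ 0) (hm : ∀ x : L, ⁅x, m⁆ = 0) (x : L)
    (m' : M) : ⁅x, m'⁆ = 0 := by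
  have hne : LieModule.maxTrivSubmodule k L M ≠ ⊥ := fun h ↦
    hm₀ ((LieSubmodule.eq_bot_iff _).mp h m hm)
  have hm' : m' ∈ LieModule.maxTrivSubmodule k L M :=
    (eq_bot_or_eq_top _).resolve_left hne ▸ LieSubmodule.mem_top m'
  exact hm' x

end Irreducible

section Classification

attribute [local instance 100] LieRing.ofAssociativeRing

variable {k n : Type*} [Field k] [Fintype n] [DecidableEq n]

theorem exists_equiv_standard_or_dual_of_finrank_lt [IsAlgClosed k] [CharZero k] {M : Type*}
    [AddCommGroup M] [Module k M] [LieRingModule (sl n k) M] [LieModule k (sl n k) M]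
    [FiniteDimensional k M] [LieModule.IsIrreducible k (sl n k) M]
    (htriv : ¬ ∀ (x : sl n k) (m : M), ⁅x, m⁆ = 0)
    (hM : finrank k M < (Fintype.card n).choose 2) :
    (∃ e : M ≃ₗ[k] (n → k), ∀ (x : sl n k) (m : M),
      e ⁅x, m⁆ = (x : Matrix n n k).mulVec (e m)) ∨
    ∃ e : M ≃ₗ[k] (n → k), ∀ (x : sl n k) (m : M),
      e ⁅x, m⁆ = -(x : Matrix n n k).transpose.mulVec (e m) := by
  have : Nontrivial M := LieModule.nontrivial_of_isIrreducible k (sl n k) M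
  obtain ⟨χ, hχ, i, j, hij⟩ : ∃ χ, IsGLWeight (glRep M : Matrix n n k →ₗ⁅k⁆ _) χ ∧
      ∃ i j, χ i ≠ χ j := by
    by_contra! hconst
    obtain ⟨χ, hχ⟩ := exists_isGLWeight (glRep M : Matrix n n k →ₗ⁅k⁆ _)
    obtain ⟨m, hm₀, hm⟩ := isGLWeight_iff.mp hχ
    refine htriv (lie_eq_zero_of_forall_lie_eq_zero k hm₀ fun x ↦ ?_)
    rw [← glRep_coe]
    exact apply_eq_zero_of_forall_isGLWeight_const hconst hm₀ hm (trace_coe_sl x)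
  have hn := hχ.four_le_card hij hM
  have : Nonempty n := ⟨i⟩
  obtain ⟨b, z, ε, hε, rfl⟩ := hχ.exists_eq_add_single hn hM
  obtain rfl | rfl | rfl : ε = 0 ∨ ε = 1 ∨ ε = -1 := by grind
  · simp at hij
  · left
    obtain ⟨φ, hφ, hequiv⟩ := exists_injective_equivariant_of_add_single hn hM glRep_one
      (b := b) (z := z) (by simpa using hχ)
    exact exists_equiv_of_injective_equivariant (fun x : sl n k ↦ (x : Matrix n n k).mulVec) hφ
      fun x v ↦ by rw [← glRep_coe, hequiv _ v (trace_coe_sl x)]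
  · right
    obtain ⟨φ, hφ, hequiv⟩ := exists_injective_equivariant_of_sub_single hn hM glRep_one
      (b := b) (z := z) (by simpa [sub_eq_add_neg, Pi.single_neg] using hχ)
    exact exists_equiv_of_injective_equivariant
      (fun (x : sl n k) v ↦ -(x : Matrix n n k).transpose.mulVec v) hφ
      fun x v ↦ by rw [← glRep_coe, hequiv _ v (trace_coe_sl x)]

theorem not_exists_equiv_standard_dual (hn : 3 ≤ Fintype.card n) :
    ¬ ∃ e : (n → k) ≃ₗ[k] (n → k), ∀ (x : sl n k) (v : n → k),
      e ((x : Matrix n n k).mulVec v) = -(x : Matrix n n k).transpose.mulVec (e v) := by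
  rintro ⟨e, he⟩
  obtain ⟨i, j, l, hij, hil, hjl⟩ : ∃ i j l : n, i ≠ j ∧ i ≠ l ∧ j ≠ l :=
    Fintype.two_lt_card_iff.mp hn
  have hsupp {j : n} (hij : i ≠ j) {a : n} (ha : a ≠ j) : e (Pi.single i 1) a = 0 := by
    have := he (single i j hij 1) (Pi.single j 1)
    rw [val_single, Matrix.transpose_single, Matrix.single_mulVec, Matrix.single_mulVec, one_mul,
      one_mul, Pi.single_eq_same] at this
    rw [Pi.single, this]
    simp [ha]
  have hzero : e (Pi.single i 1) = 0 := by
    ext a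
    rcases eq_or_ne a j with rfl | ha
    · exact hsupp hil hjl
    · exact hsupp hij ha
  exact one_ne_zero (Pi.single_eq_zero_iff.mp (e.map_eq_zero_iff.mp hzero))

end Classification

theorem sl6_irreducibles_of_dim_le_14_general {k n : Type*} [Field k] [IsAlgClosed k] [CharZero k]
    [Fintype n] [DecidableEq n] (hn : 3 ≤ Fintype.card n) :
    (∀ (M : Type*) [AddCommGroup M] [Module k M] [LieRingModule (sl n k) M]
        [LieModule k (sl n k) M] [FiniteDimensional k M] [LieModule.IsIrreducible k (sl n k) M],
      (¬ ∀ (x : sl n k) (m : M), ⁅x, m⁆ = 0) →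
      finrank k M < (Fintype.card n).choose 2 →
      ((∃ e : M ≃ₗ[k] (n → k), ∀ (x : sl n k) (m : M),
          e ⁅x, m⁆ = (x : Matrix n n k).mulVec (e m)) ∨
       (∃ e : M ≃ₗ[k] (n → k), ∀ (x : sl n k) (m : M),
          e ⁅x, m⁆ = -(x : Matrix n n k).transpose.mulVec (e m)))) ∧
    ¬ ∃ e : (n → k) ≃ₗ[k] (n → k), ∀ (x : sl n k) (v : n → k),
        e ((x : Matrix n n k).mulVec v) = -(x : Matrix n n k).transpose.mulVec (e v) :=
  ⟨fun _ ↦ exists_equiv_standard_or_dual_of_finrank_lt,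
    not_exists_equiv_standard_dual hn⟩

/-- The Lie algebra `sl(6)` over an algebraically closed field of
characteristic zero has exactly two non-trivial irreducible representations of dimension at
most `14`: the standard (6-dimensional) representation and its dual; moreover these two are
not isomorphic. -/
theorem sl6_irreducibles_of_dim_le_14
    {k : Type*} [Field k] [IsAlgClosed k] [CharZero k] :
    (∀ (M : Type) (_ : AddCommGroup M) (_ : Module k M)
        (_ : LieRingModule ↥(sl (Fin 6) k) M) (_ : LieModule k ↥(sl (Fin 6) k) M)
        (_ : FiniteDimensional k M) (_ : LieModule.IsIrreducible k ↥(sl (Fin 6) k) M),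
      (¬ ∀ (x : ↥(sl (Fin 6) k)) (m : M), ⁅x, m⁆ = 0) →
      finrank k M ≤ 14 →
      ((∃ e : M ≃ₗ[k] (Fin 6 → k), ∀ (x : ↥(sl (Fin 6) k)) (m : M),
          e ⁅x, m⁆ = (x : Matrix (Fin 6) (Fin 6) k).mulVec (e m)) ∨
       (∃ e : M ≃ₗ[k] (Fin 6 → k), ∀ (x : ↥(sl (Fin 6) k)) (m : M),
          e ⁅x, m⁆ = - (x : Matrix (Fin 6) (Fin 6) k).transpose.mulVec (e m)))) ∧
    ¬ ∃ e : (Fin 6 → k) ≃ₗ[k] (Fin 6 → k), ∀ (x : ↥(sl (Fin 6) k)) (v : Fin 6 → k),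
        e ((x : Matrix (Fin 6) (Fin 6) k).mulVec v)
          = - (x : Matrix (Fin 6) (Fin 6) k).transpose.mulVec (e v) := by
  obtain ⟨hclass, hdual⟩ := sl6_irreducibles_of_dim_le_14_general (k := k) (n := Fin 6) (by simp)
  exact ⟨fun M _ _ _ _ _ _ htriv hM ↦
    hclass M htriv (hM.trans_lt (by decide)), hdual⟩
end

section
/- The Hilbert function of the graded ring of invariants of 8 points on P¹ (with democratic linearization), namely R_k = H⁰((P¹)⁸, O(k,...,k))^{SL(2)}, is f(k) = (k⁵ + 5k⁴ + 11k³ + 13k² + 9k + 3)/3, and its Hilbert series equals (1 + 8t + 22t² + 8t³ + t⁴)/(1−t)⁶. -/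
open MvPolynomial

/-- The action of a `2×2` matrix `g` on polynomial functions of 8 points on `P¹` (8 pairs of
binary variables, the pair indexed by `i : Fin 8` being the homogeneous coordinates of the
`i`-th point): each variable `X (i, a)` is sent to `∑ b, g a b • X (i, b)`. -/
noncomputable def sl2Sub {k : Type*} [CommSemiring k] (g : Matrix (Fin 2) (Fin 2) k) :
    MvPolynomial (Fin 8 × Fin 2) k →ₐ[k] MvPolynomial (Fin 8 × Fin 2) k :=
  aeval fun p : Fin 8 × Fin 2 => ∑ b : Fin 2, C (g p.2 b) * X (p.1, b)

/-- The degree-`d` piece of the graded ring of invariants of 8 points on `P¹` (with the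
democratic linearization): `SL(2)`-invariant polynomials in the 8 pairs of binary variables
that are multihomogeneous of multidegree `(d, …, d)`. -/
noncomputable def invariants8 (k : Type*) [CommRing k] (d : ℕ) :
    Submodule k (MvPolynomial (Fin 8 × Fin 2) k) :=
  (⨅ g : Matrix.SpecialLinearGroup (Fin 2) k,
      LinearMap.eqLocus (sl2Sub (g : Matrix (Fin 2) (Fin 2) k)).toLinearMap LinearMap.id) ⊓
  weightedHomogeneousSubmodule k (fun p : Fin 8 × Fin 2 => Pi.single p.1 1)
    (fun _ : Fin 8 => d)

/-!
The diagonal torus of `SL(2)` grades the forms of multidegree `r`, and for this grading the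
polarization operators `E` and `F` satisfy the relations of `𝔰𝔩₂`. Since `SL(2)` is generated by the
one-parameter groups of `E` and `F`, in characteristic zero the invariants are the forms killed by
both, that is, the forms of weight `0` killed by `E`. Since `E` maps the weight-`0` forms onto the
weight-`2` forms, the dimension is the number of monomials of weight `0` minus the number of
monomials of weight `2`. Counting monomials by the exponents of the first variables, this is minus
the coefficient of `T ^ (|r| / 2 + 1)` in `(1 - T) * ∏ i, (1 + T + ⋯ + T ^ r i)`, which for equal
`r i = d` is an alternating sum of binomial coefficients. For eight points, only four of its terms
are nonzero.
-/

section Sl2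

variable {k V : Type*} [AddCommGroup V]

/-- `E`, `F` and `H` satisfy the relations of `𝔰𝔩₂` on the sum of the subspaces `W m`, where `H` is
multiplication by `m` on `W m`. Neither directness nor exhaustiveness of the sum is required, and,
unlike for `IsSl2Triple`, `H` may vanish. -/
structure IsSl2WeightGrading [CommRing k] [Module k V] (E F : Module.End k V)
    (W : ℤ → Submodule k V) : Prop where
  raise_mem : ∀ {m v}, v ∈ W m → E v ∈ W (m + 2)
  lower_mem : ∀ {m v}, v ∈ W m → F v ∈ W (m - 2)
  raise_lower : ∀ {m v}, v ∈ W m → E (F v) = F (E v) + (m : k) • v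

namespace IsSl2WeightGrading

section CommRing

variable [CommRing k] [Module k V] {E F : Module.End k V} {W : ℤ → Submodule k V} {m : ℤ} {v : V}

theorem symm (h : IsSl2WeightGrading E F W) : IsSl2WeightGrading F E fun m ↦ W (-m) where
  raise_mem {m _} hv := by simpa only [neg_add'] using h.lower_mem hv
  lower_mem {m _} hv := by simpa only [neg_sub', sub_neg_eq_add] using h.raise_mem hv
  raise_lower hv := by simp [h.raise_lower hv]

theorem raise_pow_mem (h : IsSl2WeightGrading E F W) (hv : v ∈ W m) (n : ℕ) :
    (E ^ n) v ∈ W (m + 2 * n) := by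
  induction n with
  | zero => simpa using hv
  | succ n ih =>
    rw [pow_succ', Module.End.mul_apply, Nat.cast_succ, mul_add_one, ← add_assoc]
    exact h.raise_mem ih

theorem raise_pow_succ_lower (h : IsSl2WeightGrading E F W) (hv : v ∈ W m) (n : ℕ) :
    (E ^ (n + 1)) (F v) = F ((E ^ (n + 1)) v) + (((n + 1) * (m + n) : ℤ) : k) • (E ^ n) v := by
  induction n with
  | zero => simpa using h.raise_lower hv
  | succ n ih =>
    rw [pow_succ' E (n + 1), Module.End.mul_apply, Module.End.mul_apply, ih, map_add, map_smul,
      h.raise_lower (h.raise_pow_mem hv _), ← Module.End.mul_apply E (E ^ n), ← pow_succ',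
      add_assoc, ← add_smul]
    congr 2
    push_cast
    ring

theorem exists_raise_pow_eq_zero (h : IsSl2WeightGrading E F W) (hfin : {m | W m ≠ ⊥}.Finite)
    (hv : v ∈ W m) : ∃ n : ℕ, (E ^ n) v = 0 := by
  have hinj : Function.Injective fun n : ℕ ↦ m + 2 * (n : ℤ) := fun a b hab ↦ by
    simpa using hab
  obtain ⟨n, hn⟩ := (hfin.preimage hinj.injOn).exists_notMem
  have hbot : W (m + 2 * n) = ⊥ := by simpa using hn
  exact ⟨n, (Submodule.mem_bot k).1 (hbot ▸ h.raise_pow_mem hv n)⟩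

end CommRing

section Field

variable [Field k] [CharZero k] [Module k V] {E F : Module.End k V} {W : ℤ → Submodule k V} {m : ℤ}
  {v w : V}

theorem exists_raise_eq_of_raise_pow_eq_zero (h : IsSl2WeightGrading E F W) (hm : 0 < m) {n : ℕ}
    (hw : w ∈ W m) (hn : (E ^ n) w = 0) : ∃ v ∈ W (m - 2), E v = w := by
  induction n generalizing w with
  | zero => exact ⟨0, zero_mem _, by simpa using hn.symm⟩
  | succ n ih =>
    set c : k := (((n + 1) * (m + n) : ℤ) : k) with hc
    have hc0 : c ≠ 0 := by rw [hc, Int.cast_ne_zero]; positivity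
    have hEF : E (F w) ∈ W m := by simpa using h.raise_mem (h.lower_mem hw)
    have hcomm : (E ^ n) (E (F w)) = c • (E ^ n) w := by
      rw [← Module.End.mul_apply, ← pow_succ, h.raise_pow_succ_lower hw, hn, map_zero, zero_add]
    obtain ⟨v, hv, hEv⟩ := ih (sub_mem hw ((W m).smul_mem c⁻¹ hEF)) (by
      rw [map_sub, map_smul, hcomm, inv_smul_smul₀ hc0, sub_self])
    refine ⟨v + c⁻¹ • F w, add_mem hv (Submodule.smul_mem _ _ (h.lower_mem hw)), ?_⟩
    rw [map_add, map_smul, hEv, sub_add_cancel]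

theorem eq_zero_of_lower_eq_zero_of_raise_pow_eq_zero (h : IsSl2WeightGrading E F W) (hm : 0 < m)
    {n : ℕ} (hw : w ∈ W m) (hF : F w = 0) (hn : (E ^ n) w = 0) : w = 0 := by
  induction n with
  | zero => simpa using hn
  | succ n ih =>
    have hsmul := h.raise_pow_succ_lower hw n
    rw [hF, hn, map_zero, map_zero, zero_add, eq_comm, smul_eq_zero, Int.cast_eq_zero] at hsmul
    exact ih (hsmul.resolve_left (by positivity))

theorem lower_eq_zero_of_raise_eq_zero (h : IsSl2WeightGrading E F W)
    (hfin : {m | W m ≠ ⊥}.Finite) (hv : v ∈ W 0) (hE : E v = 0) : F v = 0 := by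
  have hFv : F v ∈ W (-2) := by simpa using h.lower_mem hv
  have hEF : E (F v) = 0 := by simp [h.raise_lower hv, hE]
  obtain ⟨n, hn⟩ := h.symm.exists_raise_pow_eq_zero
    (hfin.preimage neg_injective.injOn) hFv
  exact h.symm.eq_zero_of_lower_eq_zero_of_raise_pow_eq_zero two_pos hFv hEF hn

theorem finrank_inf_ker_raise_add_finrank (h : IsSl2WeightGrading E F W)
    (hfin : {m | W m ≠ ⊥}.Finite) (hm : 0 < m + 2) [Module.Finite k (W m)] :
    Module.finrank k ↥(W m ⊓ LinearMap.ker E) + Module.finrank k (W (m + 2)) =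
      Module.finrank k (W m) := by
  have hmap : (W m).map E = W (m + 2) := by
    refine le_antisymm (Submodule.map_le_iff_le_comap.2 fun v ↦ h.raise_mem) fun w hw ↦ ?_
    obtain ⟨n, hn⟩ := h.exists_raise_pow_eq_zero hfin hw
    obtain ⟨v, hv, rfl⟩ := h.exists_raise_eq_of_raise_pow_eq_zero hm hw hn
    exact Submodule.mem_map_of_mem (by simpa using hv)
  have hker : (LinearMap.ker (E.domRestrict (W m))).map (W m).subtype =
      W m ⊓ LinearMap.ker E := by
    rw [LinearMap.domRestrict, LinearMap.ker_comp, Submodule.map_comap_subtype]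
  rw [← LinearMap.finrank_range_add_finrank_ker (E.domRestrict (W m)), LinearMap.range_domRestrict,
    hmap, ← hker, Submodule.finrank_map_subtype_eq, add_comm]

end Field

end IsSl2WeightGrading

end Sl2

section WeightedHomogeneous

variable {σ R M : Type*}

theorem mkDerivation_isWeightedHomogeneous [CommSemiring R] [AddCommMonoid M] {w : σ → M} {δ m : M}
    {v : σ → MvPolynomial σ R} (hv : ∀ i, IsWeightedHomogeneous w (v i) (w i + δ))
    {f : MvPolynomial σ R} (hf : IsWeightedHomogeneous w f m) :
    IsWeightedHomogeneous w (mkDerivation R v f) (m + δ) := by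
  induction hf using IsWeightedHomogeneous.induction_on with
  | zero => simpa only [map_zero] using isWeightedHomogeneous_zero R w _
  | add p q _ _ hp hq => simpa only [map_add] using hp.add hq
  | monomial d a hd =>
    rw [mkDerivation_monomial]
    refine (weightedHomogeneousSubmodule R w _).smul_mem a (Submodule.sum_mem _ fun i hi ↦ ?_)
    have hpred : IsWeightedHomogeneous w (monomial (d - Finsupp.single i 1) (d i : R))
        (Finsupp.weight w (d - Finsupp.single i 1)) := isWeightedHomogeneous_monomial _ _ _ rfl
    rw [mem_weightedHomogeneousSubmodule, ← hd,
      ← Finsupp.weight_sub_single_add (Finsupp.mem_support_iff.1 hi), add_assoc]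
    exact hpred.mul (hv i)

theorem coeff_mkDerivation_smul_X [CommSemiring R] (c : σ → R) (s : σ →₀ ℕ)
    (f : MvPolynomial σ R) :
    coeff s (mkDerivation R (fun i ↦ c i • X i) f) = Finsupp.weight c s * coeff s f := by
  classical
  have hmonomial (t : σ →₀ ℕ) (a : R) : mkDerivation R (fun i ↦ c i • X i) (monomial t a) =
      Finsupp.weight c t • monomial t a := by
    rw [mkDerivation_monomial, Finsupp.weight_apply, Finsupp.sum, Finsupp.sum, Finset.smul_sum,
      Finset.sum_smul]
    refine Finset.sum_congr rfl fun i hi ↦ ?_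
    have hle : Finsupp.single i 1 ≤ t := by
      rw [Finsupp.single_le_iff, Nat.one_le_iff_ne_zero]
      exact Finsupp.mem_support_iff.1 hi
    rw [X, smul_eq_mul, mul_smul_comm, monomial_mul, tsub_add_cancel_of_le hle, smul_monomial,
      smul_monomial, smul_monomial]
    congr 1
    simp only [smul_eq_mul, nsmul_eq_mul, mul_one]
    ring
  induction f using MvPolynomial.induction_on' with
  | monomial t a =>
    rw [hmonomial, coeff_smul, coeff_monomial, smul_eq_mul]
    split_ifs with h
    · rw [h]
    · simp only [mul_zero]
  | add p q hp hq => rw [map_add, coeff_add, coeff_add, hp, hq, mul_add]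

theorem mkDerivation_intCast_smul_X_eq_iff [CommRing R] [IsDomain R] [CharZero R] {w : σ → ℤ}
    {m : ℤ} {f : MvPolynomial σ R} :
    mkDerivation R (fun i ↦ (w i : R) • X i) f = (m : R) • f ↔ IsWeightedHomogeneous w f m := by
  rw [MvPolynomial.ext_iff]
  refine forall_congr' fun s ↦ ?_
  have hcast : Finsupp.weight (fun i ↦ (w i : R)) s = (Finsupp.weight w s : ℤ) := by
    simp [Finsupp.weight_apply, Finsupp.sum]
  rw [coeff_mkDerivation_smul_X, hcast, coeff_smul, smul_eq_mul, mul_eq_mul_right_iff,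
    Int.cast_inj, ne_eq, or_iff_not_imp_right]

theorem weight_prodMk {N : Type*} [AddCommMonoid M] [AddCommMonoid N] (w : σ → M) (w' : σ → N)
    (s : σ →₀ ℕ) :
    Finsupp.weight (fun i ↦ (w i, w' i)) s = (Finsupp.weight w s, Finsupp.weight w' s) := by
  simp [Finsupp.weight_apply, Finsupp.sum, Prod.ext_iff, Prod.fst_sum, Prod.snd_sum]

theorem isWeightedHomogeneous_prodMk {N : Type*} [CommSemiring R] [AddCommMonoid M]
    [AddCommMonoid N] {w : σ → M} {w' : σ → N} {f : MvPolynomial σ R} {m : M} {n : N} :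
    IsWeightedHomogeneous (fun i ↦ (w i, w' i)) f (m, n) ↔
      IsWeightedHomogeneous w f m ∧ IsWeightedHomogeneous w' f n := by
  simp only [IsWeightedHomogeneous, weight_prodMk, Prod.mk.injEq, imp_and, forall_and]

variable [CommSemiring R] [AddCommMonoid M]

theorem finrank_weightedHomogeneousSubmodule [StrongRankCondition R] (w : σ → M) (m : M) :
    Module.finrank R (weightedHomogeneousSubmodule R w m) =
      Nat.card {s : σ →₀ ℕ | Finsupp.weight w s = m} := by
  rw [weightedHomogeneousSubmodule_eq_finsupp_supported]
  exact Module.finrank_eq_nat_card_basis (basisRestrictSupport R {s | Finsupp.weight w s = m})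

theorem finite_weightedHomogeneousSubmodule {w : σ → M} {m : M}
    (h : {s : σ →₀ ℕ | Finsupp.weight w s = m}.Finite) :
    Module.Finite R (weightedHomogeneousSubmodule R w m) := by
  rw [weightedHomogeneousSubmodule_eq_finsupp_supported]
  have := h.to_subtype
  exact Module.Finite.of_basis (basisRestrictSupport R {s | Finsupp.weight w s = m})

theorem exists_weight_eq_of_weightedHomogeneousSubmodule_ne_bot {w : σ → M} {m : M}
    (h : weightedHomogeneousSubmodule R w m ≠ ⊥) : ∃ s : σ →₀ ℕ, Finsupp.weight w s = m := by
  obtain ⟨f, hf, hf0⟩ := (Submodule.ne_bot_iff _).1 h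
  obtain ⟨s, hs⟩ := ne_zero_iff.1 hf0
  exact ⟨s, hf hs⟩

end WeightedHomogeneous

section Flow

variable {σ R : Type*} [CommRing R]

/-- The polynomial curve `X + T • v` through the generic point `X`, i.e. the translate of a
polynomial along the vector field `v` at time `T`. If `v` is constant along the curve, this is the
flow of `v`. -/
noncomputable def flow (v : σ → MvPolynomial σ R) :
    MvPolynomial σ R →ₐ[R] Polynomial (MvPolynomial σ R) :=
  aeval fun i ↦ Polynomial.C (X i) + Polynomial.X * Polynomial.C (v i)

theorem flow_C (v : σ → MvPolynomial σ R) (a : R) : flow v (C a) = Polynomial.C (C a) :=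
  aeval_C _ a

theorem flow_X (v : σ → MvPolynomial σ R) (i : σ) :
    flow v (X i) = Polynomial.C (X i) + Polynomial.X * Polynomial.C (v i) :=
  aeval_X _ i

theorem eval_flow (v : σ → MvPolynomial σ R) (t : R) (f : MvPolynomial σ R) :
    (flow v f).eval (C t) = aeval (fun i ↦ X i + t • v i) f := by
  induction f using MvPolynomial.induction_on with
  | C a => rw [flow_C, Polynomial.eval_C, aeval_C, algebraMap_eq]
  | add p q hp hq => rw [map_add, Polynomial.eval_add, hp, hq, map_add]
  | mul_X p i hp =>
    simp only [map_mul, Polynomial.eval_mul, hp, flow_X, aeval_X, Polynomial.eval_add,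
      Polynomial.eval_C, Polynomial.eval_X, smul_eq_C_mul]

theorem eval_zero_flow (v : σ → MvPolynomial σ R) (f : MvPolynomial σ R) :
    (flow v f).eval 0 = f := by
  simpa only [C_0, zero_smul, add_zero, aeval_X_left_apply] using eval_flow v 0 f

theorem derivative_flow {v : σ → MvPolynomial σ R}
    (hv : ∀ i, flow v (v i) = Polynomial.C (v i)) (f : MvPolynomial σ R) :
    Polynomial.derivative (flow v f) = flow v (mkDerivation R v f) := by
  induction f using MvPolynomial.induction_on with
  | C a => rw [flow_C, Polynomial.derivative_C, derivation_C, map_zero]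
  | add p q hp hq => rw [map_add, Polynomial.derivative_add, hp, hq, map_add, map_add]
  | mul_X p i hp =>
    have hX : Polynomial.derivative (flow v (X i)) = flow v (mkDerivation R v (X i)) := by
      simp [flow_X, hv]
    rw [map_mul, Polynomial.derivative_mul, hp, hX, Derivation.leibniz]
    simp only [smul_eq_mul, map_add, map_mul]
    ring

theorem forall_aeval_X_add_smul_eq_iff [IsDomain R] [CharZero R] {v : σ → MvPolynomial σ R}
    (hv : ∀ i, flow v (v i) = Polynomial.C (v i)) {f : MvPolynomial σ R} :
    (∀ t : R, aeval (fun i ↦ X i + t • v i) f = f) ↔ mkDerivation R v f = 0 := by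
  constructor <;> intro h
  · have hconst : flow v f = Polynomial.C f := by
      refine Polynomial.eq_of_infinite_eval_eq _ _
        ((Set.infinite_range_of_injective (C_injective σ R)).mono ?_)
      rintro _ ⟨t, rfl⟩
      exact (eval_flow v t f).trans ((h t).trans Polynomial.eval_C.symm)
    rw [← eval_zero_flow v (mkDerivation R v f), ← derivative_flow hv, hconst,
      Polynomial.derivative_C, Polynomial.eval_zero]
  · intro t
    obtain ⟨g, hg⟩ : ∃ g, flow v f = Polynomial.C g :=
      ⟨_, Polynomial.eq_C_of_derivative_eq_zero (by rw [derivative_flow hv, h, map_zero])⟩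
    rw [← eval_flow, hg, Polynomial.eval_C, ← eval_zero_flow v f, hg, Polynomial.eval_C]

end Flow

section PointsOnLine

variable {ι k : Type*}

/-- The action of a `2 × 2` matrix on forms in the pairs of binary variables indexed by `ι`,
generalizing `sl2Sub` to any set of points. -/
noncomputable def pairSubst [CommSemiring k] (g : Matrix (Fin 2) (Fin 2) k) :
    MvPolynomial (ι × Fin 2) k →ₐ[k] MvPolynomial (ι × Fin 2) k :=
  aeval fun p ↦ ∑ b : Fin 2, C (g p.2 b) * X (p.1, b)

/-- The `SL(2)`-invariant forms of multidegree `r` on `ι` points of `P¹`, generalizing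
`invariants8` to any linearization. -/
noncomputable def sl2Invariants [DecidableEq ι] (k : Type*) [CommRing k] (r : ι → ℕ) :
    Submodule k (MvPolynomial (ι × Fin 2) k) :=
  (⨅ g : Matrix.SpecialLinearGroup (Fin 2) k,
      LinearMap.eqLocus (pairSubst (g : Matrix (Fin 2) (Fin 2) k)).toLinearMap LinearMap.id) ⊓
    weightedHomogeneousSubmodule k (fun p ↦ Pi.single p.1 1) r

/-- The polarization operator `∑ᵢ X (i, a) ∂/∂X (i, b)`. For `(a, b) = (0, 1)` and `(1, 0)` these
are the raising and lowering operators of the Lie algebra of `SL(2)`. -/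
noncomputable def polarization [CommSemiring k] (a b : Fin 2) :
    Derivation k (MvPolynomial (ι × Fin 2) k) (MvPolynomial (ι × Fin 2) k) :=
  mkDerivation k fun p ↦ if p.2 = b then X (p.1, a) else 0

/-- The weights of the two binary variables under the diagonal torus of `SL(2)`. -/
def torusWeight : Fin 2 → ℤ := ![1, -1]

/-- The joint grading of forms by multidegree and torus weight. -/
def biweight [DecidableEq ι] (p : ι × Fin 2) : (ι → ℕ) × ℤ := (Pi.single p.1 1, torusWeight p.2)

/-- The forms of multidegree `r` and torus weight `m`. -/
noncomputable def weightSpace [DecidableEq ι] (k : Type*) [CommSemiring k] (r : ι → ℕ) (m : ℤ) :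
    Submodule k (MvPolynomial (ι × Fin 2) k) :=
  weightedHomogeneousSubmodule k biweight (r, m)

theorem pairSubst_mul_apply [CommSemiring k] (g h : Matrix (Fin 2) (Fin 2) k)
    (f : MvPolynomial (ι × Fin 2) k) : pairSubst (g * h) f = pairSubst h (pairSubst g f) := by
  suffices pairSubst (g * h) = (pairSubst h).comp (pairSubst (ι := ι) g) from
    DFunLike.congr_fun this f
  refine MvPolynomial.algHom_ext fun p ↦ ?_
  simp only [pairSubst, AlgHom.comp_apply, aeval_X, Matrix.mul_apply, Fin.sum_univ_two, map_add,
    map_mul, aeval_C, algebraMap_eq]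
  ring

section CommRing

variable [CommRing k]

theorem pairSubst_transvection (a b : Fin 2) (t : k) :
    pairSubst (Matrix.transvection b a t) =
      aeval fun p : ι × Fin 2 ↦
        X p + t • (if p.2 = b then X (p.1, a) else 0 : MvPolynomial _ k) := by
  refine MvPolynomial.algHom_ext fun ⟨i, c⟩ ↦ ?_
  simp only [pairSubst, aeval_X, Matrix.transvection, Matrix.add_apply, C_add, add_mul,
    Finset.sum_add_distrib]
  congr 1
  · simp [Matrix.one_apply]
  · rw [Finset.sum_eq_single a]
    · obtain rfl | hcb := eq_or_ne c b
      · simp [smul_eq_C_mul]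
      · simp [hcb, hcb.symm]
    · intro d _ hd
      simp [hd.symm]
    · simp

theorem forall_pairSubst_transvection_eq_iff [IsDomain k] [CharZero k] {a b : Fin 2} (hab : a ≠ b)
    {f : MvPolynomial (ι × Fin 2) k} :
    (∀ t : k, pairSubst (Matrix.transvection b a t) f = f) ↔ polarization a b f = 0 := by
  simp only [pairSubst_transvection]
  refine forall_aeval_X_add_smul_eq_iff fun p ↦ ?_
  split_ifs
  · simp [flow_X, hab]
  · simp

theorem commutator_polarization :
    ⁅polarization (ι := ι) (k := k) 0 1, polarization (ι := ι) (k := k) 1 0⁆ =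
      mkDerivation k fun p ↦ (torusWeight p.2 : k) • X p := by
  refine derivation_ext fun ⟨i, a⟩ ↦ ?_
  rw [Derivation.commutator_apply]
  fin_cases a <;> simp [polarization, torusWeight]

end CommRing

theorem forall_pairSubst_eq_iff [Field k] [CharZero k] {f : MvPolynomial (ι × Fin 2) k} :
    (∀ g : Matrix.SpecialLinearGroup (Fin 2) k, pairSubst g.1 f = f) ↔
      polarization 0 1 f = 0 ∧ polarization 1 0 f = 0 := by
  rw [← forall_pairSubst_transvection_eq_iff zero_ne_one,
    ← forall_pairSubst_transvection_eq_iff one_ne_zero]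
  constructor
  · intro h
    exact ⟨fun t ↦ h (.transvection one_ne_zero t), fun t ↦ h (.transvection zero_ne_one t)⟩
  · rintro ⟨h10, h01⟩ g
    induction g using Matrix.SL2.transvection_induction with
    | htransvec i j hij t =>
      obtain ⟨rfl, rfl⟩ | ⟨rfl, rfl⟩ : i = 0 ∧ j = 1 ∨ i = 1 ∧ j = 0 := by omega
      exacts [h01 t, h10 t]
    | hmul g h hg hh =>
      rw [Matrix.SpecialLinearGroup.coe_mul, pairSubst_mul_apply, hg, hh]

section WeightGrading

variable [DecidableEq ι]

theorem mem_weightSpace [CommSemiring k] {r : ι → ℕ} {m : ℤ} {f : MvPolynomial (ι × Fin 2) k} :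
    f ∈ weightSpace k r m ↔ IsWeightedHomogeneous (fun p ↦ Pi.single p.1 1) f r ∧
      IsWeightedHomogeneous (fun p ↦ torusWeight p.2) f m :=
  isWeightedHomogeneous_prodMk

theorem polarization_mem_weightSpace [CommSemiring k] (a b : Fin 2) {r : ι → ℕ} {m : ℤ}
    {f : MvPolynomial (ι × Fin 2) k} (hf : f ∈ weightSpace k r m) :
    polarization a b f ∈ weightSpace k r (m + (torusWeight a - torusWeight b)) := by
  have hv (p : ι × Fin 2) : IsWeightedHomogeneous biweight
      (if p.2 = b then X (p.1, a) else 0 : MvPolynomial (ι × Fin 2) k)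
      (biweight p + (0, torusWeight a - torusWeight b)) := by
    split_ifs with hp
    · convert isWeightedHomogeneous_X k biweight (p.1, a) using 1
      simp [biweight, hp]
    · exact isWeightedHomogeneous_zero k _ _
  simpa only [polarization, weightSpace, mem_weightedHomogeneousSubmodule, Prod.mk_add_mk,
    add_zero] using mkDerivation_isWeightedHomogeneous hv hf

theorem isSl2WeightGrading_weightSpace [Field k] [CharZero k] (r : ι → ℕ) :
    IsSl2WeightGrading (polarization 0 1).toLinearMap (polarization 1 0).toLinearMap
      (weightSpace k r) where
  raise_mem hf := polarization_mem_weightSpace 0 1 hf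
  lower_mem hf := polarization_mem_weightSpace 1 0 hf
  raise_lower {m f} hf := by
    have hcomm := DFunLike.congr_fun (commutator_polarization (ι := ι) (k := k)) f
    rw [mkDerivation_intCast_smul_X_eq_iff.2 (mem_weightSpace.1 hf).2,
      Derivation.commutator_apply, sub_eq_iff_eq_add'] at hcomm
    exact hcomm

theorem weight_biweight_eq_iff [Fintype ι] {s : ι × Fin 2 →₀ ℕ} {r : ι → ℕ} {m : ℤ} :
    Finsupp.weight biweight s = (r, m) ↔ (∀ i, s (i, 0) + s (i, 1) = r i) ∧
      2 * ∑ i, (s (i, 0) : ℤ) = ∑ i, (r i : ℤ) + m := by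
  have hmult : Finsupp.weight (fun p : ι × Fin 2 ↦ (Pi.single p.1 1 : ι → ℕ)) s =
      fun i ↦ s (i, 0) + s (i, 1) := by
    ext i
    simp [Finsupp.weight_apply, Finsupp.sum_fintype, Fintype.sum_prod_type, Pi.single_apply,
      Finset.sum_add_distrib]
  have htorus : Finsupp.weight (fun p : ι × Fin 2 ↦ torusWeight p.2) s =
      2 * ∑ i, (s (i, 0) : ℤ) - ∑ i, ((s (i, 0) + s (i, 1) : ℕ) : ℤ) := by
    simp only [Finset.mul_sum, ← Finset.sum_sub_distrib, Finsupp.weight_apply,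
      Finsupp.sum_fintype, zero_smul, implies_true, Fintype.sum_prod_type]
    refine Finset.sum_congr rfl fun i _ ↦ ?_
    simp only [Fin.sum_univ_two, torusWeight, Matrix.cons_val_zero, Matrix.cons_val_one,
      nsmul_eq_mul]
    push_cast
    ring
  rw [show biweight = fun p : ι × Fin 2 ↦ (Pi.single p.1 1, torusWeight p.2) from rfl,
    weight_prodMk, hmult, htorus, Prod.mk.injEq, funext_iff, sub_eq_iff_eq_add']
  exact and_congr_right fun h ↦ by simp only [h]

/-- A monomial of given multidegree is determined by its exponents of the first variables. -/
noncomputable def biweightEquiv [Fintype ι] (r : ι → ℕ) (m : ℤ) :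
    {s : ι × Fin 2 →₀ ℕ | Finsupp.weight biweight s = (r, m)} ≃
      {a : ι → ℕ | a ≤ r ∧ 2 * ∑ i, (a i : ℤ) = ∑ i, (r i : ℤ) + m} where
  toFun s := ⟨fun i ↦ s.1 (i, 0), by
    obtain ⟨hr, hm⟩ := weight_biweight_eq_iff.1 s.2
    exact ⟨fun i ↦ Nat.le.intro (hr i), hm⟩⟩
  invFun a := ⟨Finsupp.equivFunOnFinite.symm fun p ↦ ![a.1 p.1, r p.1 - a.1 p.1] p.2,
    weight_biweight_eq_iff.2 ⟨fun i ↦ by simpa using Nat.add_sub_cancel' (a.2.1 i), a.2.2⟩⟩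
  left_inv s := by
    have hr := (weight_biweight_eq_iff.1 s.2).1
    ext ⟨i, b⟩
    fin_cases b
    · rfl
    · exact Nat.sub_eq_of_eq_add' (hr i).symm
  right_inv a := rfl

theorem finite_setOf_weight_biweight_eq [Finite ι] (r : ι → ℕ) (m : ℤ) :
    {s : ι × Fin 2 →₀ ℕ | Finsupp.weight biweight s = (r, m)}.Finite := by
  cases nonempty_fintype ι
  have hfin : {a : ι → ℕ | a ≤ r ∧ 2 * ∑ i, (a i : ℤ) = ∑ i, (r i : ℤ) + m}.Finite :=
    (Set.finite_Iic r).subset fun _ h ↦ h.1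
  exact Set.finite_coe_iff.1 ((biweightEquiv r m).finite_iff.2 hfin)

theorem finite_setOf_weightSpace_ne_bot [CommSemiring k] [Finite ι] (r : ι → ℕ) :
    {m | weightSpace k r m ≠ ⊥}.Finite := by
  cases nonempty_fintype ι
  refine ((Set.finite_Iic r).image fun a ↦ 2 * ∑ i, (a i : ℤ) - ∑ i, (r i : ℤ)).subset
    fun m hm ↦ ?_
  obtain ⟨s, hs⟩ := exists_weight_eq_of_weightedHomogeneousSubmodule_ne_bot hm
  obtain ⟨a, ha, hsum⟩ := biweightEquiv r m ⟨s, hs⟩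
  exact ⟨a, ha, sub_eq_of_eq_add' hsum⟩

theorem sl2Invariants_eq [Finite ι] [Field k] [CharZero k] (r : ι → ℕ) :
    sl2Invariants k r = weightSpace k r 0 ⊓ LinearMap.ker (polarization 0 1).toLinearMap := by
  have hsl2 := isSl2WeightGrading_weightSpace (k := k) r
  have hfin := finite_setOf_weightSpace_ne_bot (k := k) r
  ext f
  have hmem : f ∈ sl2Invariants k r ↔
      (polarization 0 1 f = 0 ∧ polarization 1 0 f = 0) ∧
        IsWeightedHomogeneous (fun p ↦ Pi.single p.1 1) f r := by
    rw [← forall_pairSubst_eq_iff, sl2Invariants, Submodule.mem_inf, Submodule.mem_iInf]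
    rfl
  rw [hmem, Submodule.mem_inf, mem_weightSpace]
  constructor
  · rintro ⟨⟨hE, hF⟩, hr⟩
    refine ⟨⟨hr, mkDerivation_intCast_smul_X_eq_iff.1 ?_⟩, hE⟩
    rw [← commutator_polarization, Derivation.commutator_apply, hE, hF]
    simp
  · rintro ⟨hf, hE⟩
    exact ⟨⟨hE, hsl2.lower_eq_zero_of_raise_eq_zero hfin (mem_weightSpace.2 hf) hE⟩, hf.1⟩

theorem finrank_sl2Invariants_add_finrank_weightSpace [Finite ι] [Field k] [CharZero k]
    (r : ι → ℕ) :
    Module.finrank k (sl2Invariants k r) + Module.finrank k (weightSpace k r 2) =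
      Module.finrank k (weightSpace k r 0) := by
  have : Module.Finite k (weightSpace k r 0) :=
    finite_weightedHomogeneousSubmodule (finite_setOf_weight_biweight_eq r 0)
  rw [sl2Invariants_eq]
  exact (isSl2WeightGrading_weightSpace r).finrank_inf_ker_raise_add_finrank
    (finite_setOf_weightSpace_ne_bot r) two_pos

end WeightGrading

end PointsOnLine

section Counting

theorem card_filter_piFinset_range_sum_eq {ι : Type*} [Fintype ι] [DecidableEq ι] (R : Type*)
    [CommSemiring R] (r : ι → ℕ) (j : ℕ) :
    (((Fintype.piFinset fun i ↦ Finset.range (r i + 1)).filter fun a ↦ ∑ i, a i = j).card : R) =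
      PowerSeries.coeff j
        (∏ i, ∑ a ∈ Finset.range (r i + 1), (PowerSeries.X : PowerSeries R) ^ a) := by
  rw [Finset.prod_univ_sum, map_sum, Finset.card_filter, Nat.cast_sum]
  refine Finset.sum_congr rfl fun a _ ↦ ?_
  rw [Finset.prod_pow_eq_pow_sum, PowerSeries.coeff_X_pow, Nat.cast_ite, Nat.cast_one,
    Nat.cast_zero]
  exact if_congr eq_comm rfl rfl

-- For `n < s` the subtraction may truncate, but then the binomial vanishes because `0 < m`.
theorem coeff_X_pow_mul_mk_add_choose {R : Type*} [Semiring R] {m : ℕ} (hm : 0 < m)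
    (s n : ℕ) :
    PowerSeries.coeff n (PowerSeries.X ^ s * PowerSeries.mk fun j ↦ ((m + j).choose m : R) :
        PowerSeries R) =
      (n + m - s).choose m := by
  rw [PowerSeries.coeff_X_pow_mul']
  split_ifs with hs
  · rw [PowerSeries.coeff_mk, Nat.sub_add_comm hs, add_comm]
  · rw [Nat.choose_eq_zero_of_lt (by omega), Nat.cast_zero]

theorem one_sub_X_pow_pow_eq_sum {R : Type*} [CommRing R] (s n : ℕ) :
    (1 - PowerSeries.X ^ s : PowerSeries R) ^ n =
      ∑ i ∈ Finset.range (n + 1),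
        PowerSeries.C ((-1) ^ i * (n.choose i : R)) * PowerSeries.X ^ (i * s) := by
  rw [sub_eq_neg_add, add_pow]
  refine Finset.sum_congr rfl fun i _ ↦ ?_
  rw [neg_pow, one_pow, ← pow_mul, mul_comm s, map_mul, map_pow, map_neg, map_one, map_natCast]
  ring

theorem coeff_one_sub_X_mul_geom_sum_pow {R : Type*} [CommRing R] {m : ℕ} (hm : 0 < m) (d n : ℕ) :
    PowerSeries.coeff n ((1 - PowerSeries.X) *
      (∑ a ∈ Finset.range (d + 1), (PowerSeries.X : PowerSeries R) ^ a) ^ (m + 2)) =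
      ∑ i ∈ Finset.range (m + 3),
        (-1) ^ i * ((m + 2).choose i * (n + m - i * (d + 1)).choose m : R) := by
  set Q : PowerSeries R := ∑ a ∈ Finset.range (d + 1), PowerSeries.X ^ a
  have hgeom : (1 - PowerSeries.X) * Q = 1 - PowerSeries.X ^ (d + 1) := mul_neg_geom_sum _ _
  have hseries : (1 - PowerSeries.X) * Q ^ (m + 2) =
      (1 - PowerSeries.X ^ (d + 1)) ^ (m + 2) *
        PowerSeries.mk fun j ↦ ((m + j).choose m : R) := by
    rw [← hgeom, mul_pow]
    linear_combination
      -((1 - PowerSeries.X) * Q ^ (m + 2)) * PowerSeries.mk_add_choose_mul_one_sub_pow_eq_one R m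
  rw [hseries, one_sub_X_pow_pow_eq_sum, Finset.sum_mul, map_sum]
  refine Finset.sum_congr rfl fun i _ ↦ ?_
  rw [mul_assoc, PowerSeries.coeff_C_mul, coeff_X_pow_mul_mk_add_choose hm, mul_assoc]

theorem factorial_mul_choose_eq_prod {R : Type*} [CommRing R] (n m : ℕ) :
    (m.factorial : R) * n.choose m = ∏ i ∈ Finset.range m, ((n : R) - i) := by
  rw [← descPochhammer_eval_eq_prod_range, descPochhammer_eval_eq_descFactorial,
    Nat.descFactorial_eq_factorial_mul_choose, Nat.cast_mul]

end Counting

section HilbertFunction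

variable {ι k : Type*} [Fintype ι] [DecidableEq ι]

theorem finrank_weightSpace [CommSemiring k] [StrongRankCondition k] {r : ι → ℕ} {m : ℤ} {j : ℕ}
    (hj : 2 * (j : ℤ) = ∑ i, (r i : ℤ) + m) (R : Type*) [CommSemiring R] :
    (Module.finrank k (weightSpace k r m) : R) =
      PowerSeries.coeff j
        (∏ i, ∑ a ∈ Finset.range (r i + 1), (PowerSeries.X : PowerSeries R) ^ a) := by
  have hset : {a : ι → ℕ | a ≤ r ∧ 2 * ∑ i, (a i : ℤ) = ∑ i, (r i : ℤ) + m} =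
      ((Fintype.piFinset fun i ↦ Finset.range (r i + 1)).filter fun a ↦ ∑ i, a i = j) := by
    ext a
    have hsum : 2 * ∑ i, (a i : ℤ) = ∑ i, (r i : ℤ) + m ↔ ∑ i, a i = j := by
      rw [← hj, ← Nat.cast_sum]
      omega
    simp [hsum, Pi.le_def]
  rw [weightSpace, finrank_weightedHomogeneousSubmodule, Nat.card_congr (biweightEquiv r m), hset,
    Nat.card_coe_set_eq, Set.ncard_coe_finset, card_filter_piFinset_range_sum_eq]

variable [Field k] [CharZero k]

theorem finrank_sl2Invariants {r : ι → ℕ} {j : ℕ} (hj : 2 * j = ∑ i, r i) :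
    (Module.finrank k (sl2Invariants k r) : ℤ) =
      -PowerSeries.coeff (j + 1) ((1 - PowerSeries.X) *
        ∏ i, ∑ a ∈ Finset.range (r i + 1), (PowerSeries.X : PowerSeries ℤ) ^ a) := by
  have h0 := finrank_weightSpace (k := k) (m := 0) (j := j) (r := r) (by exact_mod_cast hj) ℤ
  have h2 := finrank_weightSpace (k := k) (m := 2) (j := j + 1) (r := r)
    (by rw [← Nat.cast_sum, ← hj]; push_cast; ring) ℤ
  rw [sub_mul, one_mul, map_sub, PowerSeries.coeff_succ_X_mul, ← h0, ← h2,
    ← finrank_sl2Invariants_add_finrank_weightSpace r]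
  push_cast
  ring

theorem finrank_sl2Invariants_const {m d j : ℕ} (hm : 0 < m) (hι : Fintype.card ι = m + 2)
    (hj : 2 * j = (m + 2) * d) :
    (Module.finrank k (sl2Invariants k fun _ : ι ↦ d) : ℤ) =
      -∑ i ∈ Finset.range (m + 3),
        (-1) ^ i * ((m + 2).choose i * (j + 1 + m - i * (d + 1)).choose m : ℤ) := by
  rw [finrank_sl2Invariants (j := j) (by simp [hj, hι]), Finset.prod_const, Finset.card_univ, hι,
    coeff_one_sub_X_mul_geom_sum_pow hm]

end HilbertFunction

section EightPoints

variable {k : Type*} [Field k] [CharZero k]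

theorem finrank_invariants8_eq_sum_choose_six (d : ℕ) :
    (Module.finrank k (invariants8 k d) : ℤ) =
      -(4 * d + 7).choose 6 + 8 * (3 * d + 6).choose 6 - 28 * (2 * d + 5).choose 6 +
        56 * (d + 4).choose 6 := by
  have h := finrank_sl2Invariants_const (ι := Fin 8) (k := k) (m := 6) (d := d) (j := 4 * d)
    (by norm_num) (by simp) (by ring)
  refine h.trans ?_
  have hvanish : ∑ i ∈ Finset.range 5, (-1) ^ (4 + i) *
      (Nat.choose 8 (4 + i) * (4 * d + 1 + 6 - (4 + i) * (d + 1)).choose 6 : ℤ) = 0 := by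
    refine Finset.sum_eq_zero fun i _ ↦ ?_
    have hlt : 4 * d + 1 + 6 - (4 + i) * (d + 1) < 6 := by
      have := Nat.mul_le_mul_right (d + 1) (Nat.le_add_right 4 i)
      omega
    rw [Nat.choose_eq_zero_of_lt hlt, Nat.cast_zero, mul_zero, mul_zero]
  rw [show 6 + 3 = 4 + 5 from rfl, Finset.sum_range_add, hvanish]
  have h0 : 4 * d + 1 + 6 - 0 * (d + 1) = 4 * d + 7 := by omega
  have h1 : 4 * d + 1 + 6 - 1 * (d + 1) = 3 * d + 6 := by omega
  have h2 : 4 * d + 1 + 6 - 2 * (d + 1) = 2 * d + 5 := by omega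
  have h3 : 4 * d + 1 + 6 - 3 * (d + 1) = d + 4 := by omega
  have hchoose2 : Nat.choose (6 + 2) 2 = 28 := rfl
  have hchoose3 : Nat.choose (6 + 2) 3 = 56 := rfl
  simp only [Finset.sum_range_succ, Finset.sum_range_zero, h0, h1, h2, h3, hchoose2, hchoose3,
    Nat.choose_zero_right, Nat.choose_one_right]
  push_cast
  ring

theorem three_mul_finrank_invariants8 (d : ℕ) :
    3 * Module.finrank k (invariants8 k d) =
      d ^ 5 + 5 * d ^ 4 + 11 * d ^ 3 + 13 * d ^ 2 + 9 * d + 3 := by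
  have h7 := factorial_mul_choose_eq_prod (R := ℤ) (4 * d + 7) 6
  have h6 := factorial_mul_choose_eq_prod (R := ℤ) (3 * d + 6) 6
  have h5 := factorial_mul_choose_eq_prod (R := ℤ) (2 * d + 5) 6
  have h4 := factorial_mul_choose_eq_prod (R := ℤ) (d + 4) 6
  have hfact : Nat.factorial 6 = 720 := rfl
  simp only [Finset.prod_range_succ, Finset.prod_range_zero, hfact] at h7 h6 h5 h4
  zify
  rw [finrank_invariants8_eq_sum_choose_six]
  refine mul_left_cancel₀ (show (720 : ℤ) ≠ 0 by norm_num) ?_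
  push_cast at *
  linear_combination 3 * (-h7 + 8 * h6 - 28 * h5 + 56 * h4)

theorem finrank_invariants8_eq_sum_choose_five (d : ℕ) :
    Module.finrank k (invariants8 k d) =
      (d + 5).choose 5 + 8 * (d + 4).choose 5 + 22 * (d + 3).choose 5 + 8 * (d + 2).choose 5 +
        (d + 1).choose 5 := by
  have hfact : Nat.factorial 5 = 120 := rfl
  have hchoose (c : ℕ) := factorial_mul_choose_eq_prod (R := ℤ) (d + c) 5
  simp only [Finset.prod_range_succ, Finset.prod_range_zero, hfact] at hchoose
  have hpoly := three_mul_finrank_invariants8 (k := k) d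
  zify at hpoly ⊢
  refine mul_left_cancel₀ (show (120 : ℤ) ≠ 0 by norm_num) ?_
  push_cast at *
  linear_combination 40 * hpoly - hchoose 5 - 8 * hchoose 4 - 22 * hchoose 3 - 8 * hchoose 2 -
    hchoose 1

theorem hilbertSeries_invariants8 (k : Type*) [Field k] [CharZero k] :
    PowerSeries.mk (fun d : ℕ ↦ (Module.finrank k (invariants8 k d) : ℤ)) =
      (1 + 8 * PowerSeries.X + 22 * PowerSeries.X ^ 2 + 8 * PowerSeries.X ^ 3 +
        PowerSeries.X ^ 4) * PowerSeries.mk fun d ↦ ((5 + d).choose 5 : ℤ) := by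
  ext d
  have hcoeff (s : ℕ) := coeff_X_pow_mul_mk_add_choose (R := ℤ) (m := 5) (by norm_num) s d
  have hcoeff_one := hcoeff 1
  rw [pow_one] at hcoeff_one
  have hnum (a : ℕ) [a.AtLeastTwo] (f : PowerSeries ℤ) :
      PowerSeries.coeff d (OfNat.ofNat a * f) = OfNat.ofNat a * PowerSeries.coeff d f := by
    rw [← map_ofNat (PowerSeries.C (R := ℤ)) a, PowerSeries.coeff_C_mul]
  simp only [add_mul, one_mul, mul_assoc, map_add, hnum, hcoeff, hcoeff_one,
    PowerSeries.coeff_mk, finrank_invariants8_eq_sum_choose_five, add_comm 5 d]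
  push_cast
  rfl

end EightPoints

/-- The Hilbert function of the ring of `SL(2)`-invariants of 8 points on
`P¹` is `f(d) = (d⁵ + 5 d⁴ + 11 d³ + 13 d² + 9 d + 3)/3`, and the Hilbert series is
`(1 + 8 t + 22 t² + 8 t³ + t⁴)/(1 − t)⁶`. -/
theorem hilbert_function_M8 {k : Type*} [Field k] [CharZero k] :
    (∀ d : ℕ, 3 * Module.finrank k ↥(invariants8 k d)
        = d ^ 5 + 5 * d ^ 4 + 11 * d ^ 3 + 13 * d ^ 2 + 9 * d + 3) ∧
    (PowerSeries.mk (fun d : ℕ => (Module.finrank k ↥(invariants8 k d) : ℤ))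
        * (1 - PowerSeries.X) ^ 6
      = 1 + 8 * PowerSeries.X + 22 * PowerSeries.X ^ 2 + 8 * PowerSeries.X ^ 3
        + PowerSeries.X ^ 4) := by
  refine ⟨three_mul_finrank_invariants8, ?_⟩
  rw [hilbertSeries_invariants8, mul_assoc, PowerSeries.mk_add_choose_mul_one_sub_pow_eq_one ℤ 5,
    mul_one]
end
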